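/- Let p be an odd prime and (V, Q) a nondegenerate quadratic space over ℚ_p of dimension n ≥ 3. Assume that V has unit determinant, i.e. the determinant of the Gram matrix of some (equivalently, any) basis of V lies in ℤ_p^× · (ℚ_p^×)², and that V contains no self-dual lattice. Then V contains an almost-self-dual lattice: a vertex lattice Λ with pΛ ⊆ Λ^∨ ⊆ Λ and dim_{𝔽_p}(Λ/Λ^∨) = 2 such that moreover every x ∈ Λ with Q(x) ∈ ℤ_p lies in Λ^∨. -/

import Mathlib

/-!
Statement 2: Let `p` be an odd prime and `(V, Q)` a nondegenerate quadratic space over `ℚ_p` of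
dimension `n ≥ 3` with unit determinant, containing no self-dual lattice.  Then `V` contains an
almost-self-dual lattice: a vertex lattice `Λ` with `pΛ ⊆ Λ^∨ ⊆ Λ`, `dim_{𝔽_p} (Λ/Λ^∨) = 2`,
such that every `x ∈ Λ` with `Q x ∈ ℤ_p` lies in `Λ^∨`.
-/

open QuadraticMap

variable (p : ℕ) [Fact p.Prime]
variable {V : Type*} [AddCommGroup V] [Module ℚ_[p] V] [Module ℤ_[p] V]
  [IsScalarTower ℤ_[p] ℚ_[p] V]

/-- `L` is a `ℤ_p`-lattice in the `ℚ_p`-vector space `V`: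
a finitely generated `ℤ_p`-submodule spanning `V` over `ℚ_p`. -/
def IsLattice (L : Submodule ℤ_[p] V) : Prop :=
  L.FG ∧ Submodule.span ℚ_[p] (L : Set V) = ⊤

/-- The dual lattice `L^∨ = {x ∈ V : [x, y] ∈ ℤ_p for all y ∈ L}` with respect to the
bilinear form `[x, y] = Q (x + y) - Q x - Q y` associated to `Q`. -/
noncomputable def dualLattice (Q : QuadraticForm ℚ_[p] V) (L : Submodule ℤ_[p] V) :
    Submodule ℤ_[p] V :=
  LinearMap.BilinForm.dualSubmodule (QuadraticMap.polarBilin Q) L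

/-- There is a saturated chain (each step a covering in the lattice of `ℤ_p`-submodules) of
length `k` from `A` to `B`.  For `A ≤ B` this says exactly that the module `B/A` has length `k`
over `ℤ_p`; when `B/A` is killed by `p` this is the statement `dim_{𝔽_p} (B/A) = k`. -/
def chainLength (A B : Submodule ℤ_[p] V) (k : ℕ) : Prop :=
  ∃ f : Fin (k + 1) → Submodule ℤ_[p] V,
    f 0 = A ∧ f (Fin.last k) = B ∧ ∀ i : Fin k, f i.castSucc ⋖ f i.succ

/-!
Let `L` be maximal among the `ℤ_p`-lattices on which the bilinear form `[x, y]` is integral, and put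
`Λ = L^∨`, so that `Λ^∨ = L`. If `x ∈ Λ` has `[x, x] ∈ ℤ_p`, then `L + ℤ_p x` is still integral,
so `x ∈ L` by maximality; since `[x, x] = 2 Q x`, this is the last property of `Λ`. Applied to
multiples of `x` by powers of `p`, it also gives `p Λ ⊆ L`. Hence `p [x, y]` induces on the
`𝔽_p`-vector space `Λ / L` a form without nonzero isotropic vectors, and Chevalley–Warning bounds
the dimension of `Λ / L` by two. Up to a unit, the Gram determinant of `Λ` is `p` to the power
`-dim (Λ / L)`; as `V` has unit determinant, this dimension is even. It is not zero because `L` is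
not self-dual.
-/

section MaximalIntegral

variable {R K M : Type*} [CommRing R] [Field K] [Algebra R K] [AddCommGroup M] [Module R M]
  [Module K M] [IsScalarTower R K M] {B : LinearMap.BilinForm K M} {L N : Submodule R M} {x : M}

theorem dualSubmodule_anti (h : L ≤ N) : B.dualSubmodule N ≤ B.dualSubmodule L :=
  fun _ hx y hy => hx y (h hy)

theorem le_dualSubmodule_comm (hB : B.IsSymm) :
    L ≤ B.dualSubmodule N ↔ N ≤ B.dualSubmodule L := by
  have swap : ∀ {L N : Submodule R M}, L ≤ B.dualSubmodule N → N ≤ B.dualSubmodule L :=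
    fun h y hy x hx => hB.eq x y ▸ h hx y hy
  exact ⟨swap, swap⟩

theorem span_le_dualSubmodule_span {s : Set M}
    (h : ∀ x ∈ s, ∀ y ∈ s, B x y ∈ (1 : Submodule R K)) :
    Submodule.span R s ≤ B.dualSubmodule (Submodule.span R s) := by
  refine Submodule.span_le.mpr fun x hx y hy => ?_
  have hspan : Submodule.span R s ≤
      (1 : Submodule R K).comap ((B x).restrictScalars R) := Submodule.span_le.mpr (h x hx)
  exact hspan hy

theorem sup_span_singleton_le_dualSubmodule (hB : B.IsSymm) (hL : L ≤ B.dualSubmodule L)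
    (hxL : x ∈ B.dualSubmodule L) (hx : B x x ∈ (1 : Submodule R K)) :
    L ⊔ Submodule.span R {x} ≤ B.dualSubmodule (L ⊔ Submodule.span R {x}) := by
  have hspan : L ⊔ Submodule.span R {x} = Submodule.span R (insert x L) := by
    rw [Submodule.span_insert, Submodule.span_eq, sup_comm]
  rw [hspan]
  refine span_le_dualSubmodule_span ?_
  rintro y (rfl | hy) z (rfl | hz)
  · exact hx
  · exact hxL z hz
  · exact hB.eq z y ▸ hxL y hy
  · exact hL hy z hz

/-- `L` is maximal among the submodules on which `B` takes values in `R`, encoded as those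
contained in their dual; its dual is the vertex lattice we look for. -/
def IsMaximalIntegral (B : LinearMap.BilinForm K M) (L : Submodule R M) : Prop :=
  Maximal (fun N : Submodule R M => N ≤ B.dualSubmodule N) L

theorem exists_isMaximalIntegral_ge (hB : B.IsSymm) (hL : L ≤ B.dualSubmodule L) :
    ∃ N, L ≤ N ∧ IsMaximalIntegral B N := by
  refine zorn_le_nonempty₀ {N : Submodule R M | N ≤ B.dualSubmodule N} ?_ L hL
  intro c hc hchain _ _
  have pairwise : ∀ N ∈ c, ∀ N' ∈ c, N' ≤ B.dualSubmodule N := fun N hN N' hN' =>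
    (hchain.total hN hN').elim (fun h => (hc hN').trans (dualSubmodule_anti h))
      (fun h => h.trans (hc hN))
  have hsup : sSup c ≤ B.dualSubmodule (sSup c) := sSup_le fun N hN =>
    (le_dualSubmodule_comm hB).mpr (sSup_le (pairwise N hN))
  exact ⟨sSup c, hsup, fun _ => le_sSup⟩

namespace IsMaximalIntegral

theorem mem_of_apply_self_mem_one (hL : IsMaximalIntegral B L) (hB : B.IsSymm)
    (hxL : x ∈ B.dualSubmodule L) (hx : B x x ∈ (1 : Submodule R K)) : x ∈ L :=
  hL.2 (sup_span_singleton_le_dualSubmodule hB hL.1 hxL hx) le_sup_left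
    (Submodule.mem_sup_right (Submodule.mem_span_singleton_self x))

/- If `r ^ (n + 2) • x ∈ L` then `y = r ^ (n + 1) • x` satisfies
`B y y = r ^ n * B (r ^ (n + 2) • x) x ∈ R`, so the exponent can be lowered down to `1`. -/
theorem smul_mem_of_pow_smul_mem (hL : IsMaximalIntegral B L) (hB : B.IsSymm)
    (hxL : x ∈ B.dualSubmodule L) {r : R} {n : ℕ} (hn : r ^ n • x ∈ L) : r • x ∈ L := by
  match n with
  | 0 => exact L.smul_mem r (by simpa using hn)
  | 1 => simpa using hn
  | n + 2 =>
    refine smul_mem_of_pow_smul_mem hL hB hxL (n := n + 1) ?_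
    refine hL.mem_of_apply_self_mem_one hB (Submodule.smul_mem _ _ hxL) ?_
    have hself : B (r ^ (n + 1) • x) (r ^ (n + 1) • x) = r ^ n • B x (r ^ (n + 2) • x) := by
      simp only [LinearMap.map_smul_of_tower, LinearMap.smul_apply, smul_smul]
      ring_nf
    rw [hself]
    exact Submodule.smul_mem _ _ (hxL _ hn)

end IsMaximalIntegral

end MaximalIntegral

section Covering

variable {R M : Type*} [CommRing R] [IsPrincipalIdealRing R] [AddCommGroup M]
  [Module R M]

theorem covBy_span_singleton_sup_of_smul_mem {ϖ : R} (hϖ : Irreducible ϖ) {N : Submodule R M}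
    {x : M} (hx : x ∉ N) (hϖx : ϖ • x ∈ N) : N ⋖ Submodule.span R {x} ⊔ N := by
  refine ⟨by simpa using hx, fun P hNP hP => hP.not_ge ?_⟩
  obtain ⟨y, hyP, hyN⟩ := SetLike.exists_of_lt hNP
  obtain ⟨_, hrx, z, hz, rfl⟩ := Submodule.mem_sup.mp (hP.le hyP)
  obtain ⟨r, rfl⟩ := Submodule.mem_span_singleton.mp hrx
  have hrxP : r • x ∈ P := (P.add_mem_iff_left (hNP.le hz)).mp hyP
  have hr : ¬ ϖ ∣ r := by
    rintro ⟨s, rfl⟩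
    exact hyN (N.add_mem (by simpa only [smul_smul, mul_comm] using N.smul_mem s hϖx) hz)
  obtain ⟨s, t, hst⟩ := hϖ.coprime_iff_not_dvd.mpr hr
  have hxP : x ∈ P := by
    have h := P.add_mem (P.smul_mem s (hNP.le hϖx)) (P.smul_mem t hrxP)
    rwa [smul_smul, smul_smul, ← add_smul, hst, one_smul] at h
  exact sup_le (by simpa using hxP) hNP.le

end Covering

section ScaledSpan

variable {R M ι : Type*} [CommRing R] [AddCommGroup M] [Module R M] {a a' : ι → R} {e : ι → M}

/-- The span of the multiples `a i • e i` of a family `e`; for a basis `e` this is the general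
shape of a full-rank submodule given by its elementary divisors `a`. -/
def scaledSpan (a : ι → R) (e : ι → M) : Submodule R M :=
  Submodule.span R (Set.range fun i => a i • e i)

theorem smul_mem_scaledSpan (i : ι) : a i • e i ∈ scaledSpan a e :=
  Submodule.subset_span (Set.mem_range_self i)

theorem scaledSpan_one : scaledSpan (1 : ι → R) e = Submodule.span R (Set.range e) := by
  simp [scaledSpan]

theorem scaledSpan_congr (h : ∀ i, Associated (a i) (a' i)) :
    scaledSpan a e = scaledSpan a' e := by
  simp only [scaledSpan, Submodule.span_range_eq_iSup]
  refine iSup_congr fun i => ?_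
  obtain ⟨u, hu⟩ := h i
  rw [← hu, mul_comm, mul_smul, Submodule.span_singleton_smul_eq u.isUnit]

theorem dvd_of_sum_smul_mem_scaledSpan [Finite ι] (he : LinearIndependent R e) {c : ι → R}
    {s : Finset ι} (h : ∑ i ∈ s, c i • e i ∈ scaledSpan a e) {i : ι} (hi : i ∈ s) :
    a i ∣ c i := by
  classical
  cases nonempty_fintype ι
  obtain ⟨d, hd⟩ := (Submodule.mem_span_range_iff_exists_fun R).mp h
  have hcoords : ∑ j, (if j ∈ s then c j else 0) • e j = ∑ j, (d j * a j) • e j := by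
    simpa [ite_smul, mul_smul] using hd.symm
  have hci : c i = d i * a i := by simpa [hi] using he.eq_coords_of_eq hcoords i
  exact Dvd.intro_left (d i) hci.symm

theorem dvd_of_smul_mem_scaledSpan [Finite ι] (he : LinearIndependent R e) {r : R} {i : ι}
    (h : r • e i ∈ scaledSpan a e) : a i ∣ r :=
  dvd_of_sum_smul_mem_scaledSpan he (c := fun _ => r) (s := {i}) (by simpa using h)
    (Finset.mem_singleton_self i)

theorem span_singleton_sup_scaledSpan_update [DecidableEq ι] (i : ι) (r : R) :
    Submodule.span R {a i • e i} ⊔ scaledSpan (Function.update a i (r * a i)) e =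
      scaledSpan a e := by
  refine le_antisymm (sup_le ?_ ?_) ?_
  · simpa using smul_mem_scaledSpan i
  · refine Submodule.span_le.mpr ?_
    rintro _ ⟨j, rfl⟩
    rcases eq_or_ne j i with rfl | hj
    · simpa [mul_smul] using Submodule.smul_mem _ r (smul_mem_scaledSpan (a := a) (e := e) j)
    · simpa [hj] using smul_mem_scaledSpan (a := a) (e := e) j
  · refine Submodule.span_le.mpr ?_
    rintro _ ⟨j, rfl⟩
    rcases eq_or_ne j i with rfl | hj
    · exact Submodule.mem_sup_left (Submodule.mem_span_singleton_self _)
    · refine Submodule.mem_sup_right ?_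
      simpa [hj] using smul_mem_scaledSpan (a := Function.update a i (r * a i)) (e := e) j

theorem scaledSpan_update_covBy [IsDomain R] [IsPrincipalIdealRing R] [Finite ι]
    [DecidableEq ι] {ϖ : R} (hϖ : Irreducible ϖ) (he : LinearIndependent R e) {i : ι}
    (hi : a i ≠ 0) : scaledSpan (Function.update a i (ϖ * a i)) e ⋖ scaledSpan a e := by
  rw [← span_singleton_sup_scaledSpan_update (a := a) (e := e) i ϖ]
  refine covBy_span_singleton_sup_of_smul_mem hϖ (fun h => hϖ.not_isUnit ?_) ?_
  · have hdvd : ϖ * a i ∣ 1 * a i := by simpa using dvd_of_smul_mem_scaledSpan he h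
    exact isUnit_of_dvd_one ((mul_dvd_mul_iff_right hi).mp hdvd)
  · simpa [mul_smul] using
      smul_mem_scaledSpan (a := Function.update a i (ϖ * a i)) (e := e) i

end ScaledSpan

section Lattice

variable {R K M ι : Type*} [CommRing R] [Field K] [Algebra R K]
  [AddCommGroup M] [Module R M] [Module K M] [IsScalarTower R K M]

theorem isLattice_span_range_basis [Finite ι] (b : Module.Basis ι K M) :
    Submodule.IsLattice K (Submodule.span R (Set.range b)) where
  fg := Submodule.fg_span (Set.finite_range b)
  span_eq_top := by rw [Submodule.span_span_of_tower, b.span_eq]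

variable [IsFractionRing R K]

theorem span_range_extendOfIsLattice {L : Submodule R M} [Submodule.IsLattice K L]
    (b : Module.Basis ι R L) : Submodule.span R (Set.range (b.extendOfIsLattice K)) = L := by
  have hcoe : ⇑(b.extendOfIsLattice K) = L.subtype ∘ b :=
    funext fun i => b.extendOfIsLattice_apply K i
  rw [hcoe, Set.range_comp, ← Submodule.map_span, b.span_eq, Submodule.map_subtype_top]

theorem exists_pow_smul_mem [IsDomain R] [IsDiscreteValuationRing R] {ϖ : R}
    (hϖ : Irreducible ϖ) (L : Submodule R M) [Submodule.IsLattice K L] (x : M) :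
    ∃ n : ℕ, ϖ ^ n • x ∈ L := by
  have hx : x ∈ Submodule.span K (L : Set M) :=
    Submodule.IsLattice.span_eq_top (A := K) (M := L) ▸ Submodule.mem_top
  obtain ⟨y, hy, r, rfl⟩ := (IsLocalization.mem_span_iff (nonZeroDivisors R)).mp hx
  rw [Submodule.span_eq] at hy
  obtain ⟨n, u, hu⟩ := IsDiscreteValuationRing.associated_pow_irreducible
    (nonZeroDivisors.ne_zero r.2) hϖ
  have hry : (r : R) • IsLocalization.mk' K 1 r • y = y := by
    rw [← smul_assoc, Algebra.smul_def, IsLocalization.mk'_spec', map_one, one_smul]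
  refine ⟨n, ?_⟩
  rw [← hu, mul_comm, mul_smul, hry]
  exact L.smul_mem _ hy

variable [IsDomain R] [IsPrincipalIdealRing R]

theorem nonempty_basis_of_isLattice (b : Module.Basis ι K M) (L : Submodule R M)
    [Submodule.IsLattice K L] : Nonempty (Module.Basis ι R L) := by
  let c := Module.Free.chooseBasis R L
  exact ⟨c.reindex ((c.extendOfIsLattice K).indexEquiv b)⟩

theorem exists_scaledSpan_eq [Finite ι] (b : Module.Basis ι K M) {L N : Submodule R M}
    [Submodule.IsLattice K L] [Submodule.IsLattice K N] (hNL : N ≤ L) :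
    ∃ (e : Module.Basis ι K M) (a : ι → R),
      Submodule.span R (Set.range e) = L ∧ scaledSpan a e = N := by
  cases nonempty_fintype ι
  obtain ⟨c⟩ := nonempty_basis_of_isLattice b L
  have hrank : Module.finrank R (N.submoduleOf L) = Module.finrank R L := by
    rw [(Submodule.submoduleOfEquivOfLe hNL).finrank_eq, Module.finrank, Module.finrank,
      Submodule.IsLattice.rank' K N, Submodule.IsLattice.rank' K L]
  obtain ⟨c, a, d, hd⟩ := Submodule.exists_smith_normal_form_of_rank_eq c hrank
  refine ⟨c.extendOfIsLattice K, a, span_range_extendOfIsLattice c, ?_⟩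
  let d' : Module.Basis ι R N := d.map (Submodule.submoduleOfEquivOfLe hNL)
  have hd' : (fun i => a i • c.extendOfIsLattice K i) = N.subtype ∘ d' := by
    funext i
    rw [c.extendOfIsLattice_apply K]
    exact congrArg L.subtype (hd i).symm
  rw [scaledSpan, hd', Set.range_comp, ← Submodule.map_span, d'.span_eq, Submodule.map_subtype_top]

end Lattice

section LatticeDual

variable {R K M ι : Type*} [CommRing R] [Field K] [Algebra R K] [IsFractionRing R K]
  [AddCommGroup M] [Module R M] [Module K M] [IsScalarTower R K M] [Finite ι]
  {B : LinearMap.BilinForm K M}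

theorem exists_basis_span_le_dualSubmodule (B : LinearMap.BilinForm K M)
    (b : Module.Basis ι K M) : ∃ c : Module.Basis ι K M,
      Submodule.span R (Set.range c) ≤ B.dualSubmodule (Submodule.span R (Set.range c)) := by
  obtain ⟨r, hr⟩ := IsLocalization.exist_integer_multiples_of_finite (nonZeroDivisors R)
    fun ij : ι × ι => B (b ij.1) (b ij.2)
  have hunit : ∀ _ : ι, IsUnit (algebraMap R K r) := fun _ => IsLocalization.map_units K r
  refine ⟨b.isUnitSMul hunit, span_le_dualSubmodule_span ?_⟩
  rintro _ ⟨i, rfl⟩ _ ⟨j, rfl⟩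
  obtain ⟨s, hs⟩ := hr (i, j)
  refine Submodule.mem_one.mpr ⟨r * s, ?_⟩
  simp [Module.Basis.isUnitSMul_apply, hs, Algebra.smul_def]

variable [IsDomain R] [IsPrincipalIdealRing R]

theorem isLattice_dualSubmodule (hB : B.Nondegenerate) (b : Module.Basis ι K M)
    (L : Submodule R M) [Submodule.IsLattice K L] :
    Submodule.IsLattice K (B.dualSubmodule L) := by
  classical
  obtain ⟨c⟩ := nonempty_basis_of_isLattice b L
  rw [← span_range_extendOfIsLattice (K := K) c, B.dualSubmodule_span_of_basis hB]
  exact isLattice_span_range_basis _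

theorem dualSubmodule_dualSubmodule_of_isLattice (hB : B.Nondegenerate) (hB' : B.IsSymm)
    (b : Module.Basis ι K M) (L : Submodule R M) [Submodule.IsLattice K L] :
    B.dualSubmodule (B.dualSubmodule L) = L := by
  obtain ⟨c⟩ := nonempty_basis_of_isLattice b L
  rw [← span_range_extendOfIsLattice (K := K) c, B.dualSubmodule_dualSubmodule_of_basis hB hB']

theorem exists_isMaximalIntegral_isLattice (hB : B.Nondegenerate) (hB' : B.IsSymm)
    (b : Module.Basis ι K M) :
    ∃ L : Submodule R M, IsMaximalIntegral B L ∧ Submodule.IsLattice K L := by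
  obtain ⟨c, hc⟩ := exists_basis_span_le_dualSubmodule (R := R) B b
  have hlattice := isLattice_span_range_basis (R := R) c
  obtain ⟨L, hcL, hL⟩ := exists_isMaximalIntegral_ge hB' hc
  have hdual := isLattice_dualSubmodule hB c (Submodule.span R (Set.range c))
  have hfg : L.FG := hdual.fg.of_le (hL.1.trans (dualSubmodule_anti hcL))
  exact ⟨L, hL, Submodule.IsLattice.of_le_of_isLattice_of_fg K hcL hfg⟩

theorem exists_scaledSpan_piecewise_eq [DecidableEq ι] (b : Module.Basis ι K M)
    {L N : Submodule R M} [Submodule.IsLattice K L] [Submodule.IsLattice K N] (hNL : N ≤ L)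
    {ϖ : R} (hϖ : Irreducible ϖ) (hϖL : ∀ x ∈ L, ϖ • x ∈ N) :
    ∃ (e : Module.Basis ι K M) (s : Finset ι),
      Submodule.span R (Set.range e) = L ∧ scaledSpan (s.piecewise (fun _ => ϖ) 1) e = N := by
  classical
  cases nonempty_fintype ι
  obtain ⟨e, a, rfl, rfl⟩ := exists_scaledSpan_eq b hNL
  have hdvd : ∀ i, a i ∣ ϖ := fun i =>
    dvd_of_smul_mem_scaledSpan (e.linearIndependent.restrict_scalars' R)
      (hϖL _ (Submodule.subset_span (Set.mem_range_self i)))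
  refine ⟨e, Finset.univ.filter fun i => ¬ IsUnit (a i), rfl, scaledSpan_congr fun i => ?_⟩
  by_cases hi : IsUnit (a i)
  · simpa [Finset.piecewise, hi] using (associated_one_iff_isUnit.mpr hi).symm
  · simpa [Finset.piecewise, hi] using
      (hϖ.dvd_iff.mp (hdvd i)).resolve_left hi

end LatticeDual

section ChevalleyWarning

open MvPolynomial in
theorem exists_ne_zero_sum_mul_eq_zero {F σ : Type*} [Field F] [Finite F] [Fintype σ]
    (hσ : 2 < Fintype.card σ) (A : σ → σ → F) :
    ∃ c : σ → F, c ≠ 0 ∧ ∑ i, ∑ j, A i j * (c i * c j) = 0 := by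
  classical
  cases nonempty_fintype F
  let f : MvPolynomial σ F := ∑ i, ∑ j, C (A i j) * (X i * X j)
  have heval : ∀ c : σ → F, eval c f = ∑ i, ∑ j, A i j * (c i * c j) := fun c => by simp [f]
  have hdeg : f.totalDegree ≤ 2 := by
    refine totalDegree_finsetSum_le fun i _ => totalDegree_finsetSum_le fun j _ => ?_
    calc (C (A i j) * (X i * X j)).totalDegree
        ≤ (C (A i j)).totalDegree + ((X i : MvPolynomial σ F).totalDegree +
            (X j : MvPolynomial σ F).totalDegree) :=
          (totalDegree_mul _ _).trans (Nat.add_le_add_left (totalDegree_mul _ _) _)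
      _ = 2 := by simp
  let zero : { c : σ → F // eval c f = 0 } := ⟨0, by rw [heval]; simp⟩
  have hcard : 1 < Fintype.card { c : σ → F // eval c f = 0 } :=
    (CharP.char_is_prime F (ringChar F)).one_lt.trans_le <|
      Nat.le_of_dvd (Fintype.card_pos_iff.mpr ⟨zero⟩)
        (char_dvd_card_solutions (ringChar F) (hdeg.trans_lt hσ))
  obtain ⟨c, hc⟩ := Fintype.exists_ne_of_one_lt_card hcard zero
  exact ⟨c, fun h => hc (Subtype.ext h), heval c ▸ c.2⟩

theorem exists_isUnit_sum_mul_mem_maximalIdeal {R ι : Type*} [CommRing R] [IsLocalRing R]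
    [Finite (IsLocalRing.ResidueField R)] {s : Finset ι} (hs : 2 < s.card) (A : ι → ι → R) :
    ∃ c : ι → R, (∃ i ∈ s, IsUnit (c i)) ∧
      ∑ i ∈ s, ∑ j ∈ s, A i j * (c i * c j) ∈ IsLocalRing.maximalIdeal R := by
  obtain ⟨c, hc, hAc⟩ := exists_ne_zero_sum_mul_eq_zero (σ := s) (by simpa using hs)
    fun i j => IsLocalRing.residue R (A i j)
  obtain ⟨c, rfl⟩ := (IsLocalRing.residue_surjective (R := R)).comp_left c
  obtain ⟨c, rfl⟩ := Subtype.exists_pi_extension (α := fun _ => R) (p := (· ∈ s)) c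
  obtain ⟨i, hi⟩ := Function.ne_iff.mp hc
  refine ⟨c, ⟨i, i.2, by simpa using hi⟩, ?_⟩
  rw [← IsLocalRing.residue_eq_zero_iff]
  simpa [← Finset.sum_coe_sort s] using hAc

end ChevalleyWarning

section Discriminant

variable {R K M ι : Type*} [CommRing R] [Field K] [Algebra R K] [IsDomain R]
  [FaithfulSMul R K] [AddCommGroup M] [Module R M] [Module K M] [IsScalarTower R K M]
  [Fintype ι] [DecidableEq ι]

theorem exists_units_det_toMatrix_eq {b c : Module.Basis ι K M}
    (h : Submodule.span R (Set.range b) = Submodule.span R (Set.range c)) :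
    ∃ u : Rˣ, (b.toMatrix c).det = algebraMap R K u := by
  let b' := b.restrictScalars R
  let c' := (c.restrictScalars R).map (LinearEquiv.ofEq _ _ h.symm)
  refine ⟨(b'.isUnit_det c').unit, ?_⟩
  rw [IsUnit.unit_spec, Module.Basis.det_apply, RingHom.map_det]
  congr 1
  ext i j
  simp [b', c', Module.Basis.toMatrix_apply, Module.Basis.restrictScalars_repr_apply]

theorem exists_units_prod_mul_det_toMatrix_eq {B : LinearMap.BilinForm K M}
    (hB : B.Nondegenerate) {a : ι → R} (ha : ∀ i, a i ≠ 0) {e : Module.Basis ι K M}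
    (hdual : B.dualSubmodule (Submodule.span R (Set.range e)) = scaledSpan a e) :
    ∃ u : Rˣ, algebraMap R K (∏ i, a i) * (LinearMap.BilinForm.toMatrix e B).det =
      algebraMap R K u := by
  have hunit : ∀ i, IsUnit (algebraMap R K (a i)) := fun i => by simpa using ha i
  have hspan : Submodule.span R (Set.range (B.dualBasis hB e)) =
      Submodule.span R (Set.range (e.isUnitSMul hunit)) := by
    rw [← B.dualSubmodule_span_of_basis hB, hdual, scaledSpan]
    congr 2
    ext i
    simp [Module.Basis.isUnitSMul_apply]
  obtain ⟨u, hu⟩ := exists_units_det_toMatrix_eq hspan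
  have hmatrix : (B.dualBasis hB e).toMatrix (e.isUnitSMul hunit) =
      (LinearMap.BilinForm.toMatrix e B).transpose *
        Matrix.diagonal (fun i => algebraMap R K (a i)) := by
    ext i j
    simp [Module.Basis.toMatrix_apply, Module.Basis.isUnitSMul_apply,
      LinearMap.BilinForm.toMatrix_apply, Algebra.smul_def, mul_comm]
  refine ⟨u, ?_⟩
  rw [← hu, hmatrix, Matrix.det_mul, Matrix.det_transpose, Matrix.det_diagonal, map_prod, mul_comm]

end Discriminant

section Gram

variable {R K M ι : Type*} [CommRing R] [Field K] [Algebra R K] [AddCommGroup M] [Module R M]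
  [Module K M] [IsScalarTower R K M] {B : LinearMap.BilinForm K M}

theorem algebraMap_mul_apply_sum_smul_self {r : R} {c : ι → R} {e : ι → M} {s : Finset ι}
    {A : ι → ι → R} (hA : ∀ i, ∀ j ∈ s, algebraMap R K (A i j) = r • B (e i) (e j)) :
    algebraMap R K r * B (∑ i ∈ s, c i • e i) (∑ i ∈ s, c i • e i) =
      algebraMap R K (∑ i ∈ s, ∑ j ∈ s, A i j * (c i * c j)) := by
  simp only [map_sum, LinearMap.sum_apply, LinearMap.map_smul_of_tower, LinearMap.smul_apply,
    Finset.mul_sum, Algebra.smul_def, map_mul]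
  rw [Finset.sum_comm]
  refine Finset.sum_congr rfl fun i _ => Finset.sum_congr rfl fun j hj => ?_
  rw [hA i j hj, Algebra.smul_def]
  ring

end Gram

section DiscreteValuationRing

variable {R K M ι : Type*} [CommRing R] [IsDomain R] [IsDiscreteValuationRing R] [Field K]
  [Algebra R K] [IsFractionRing R K] [AddCommGroup M] [Module R M] [Module K M]
  [IsScalarTower R K M] {B : LinearMap.BilinForm K M} {ϖ : R}

theorem even_of_pow_mul_sq_eq_unit (hϖ : Irreducible ϖ) {k : ℕ} {x : K} {u : Rˣ}
    (h : algebraMap R K (ϖ ^ k) * x ^ 2 = algebraMap R K u) : Even k := by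
  obtain ⟨r, s, hs, rfl⟩ := IsFractionRing.div_surjective (A := R) x
  have hs0 : s ≠ 0 := nonZeroDivisors.ne_zero hs
  have hrs : ϖ ^ k * r ^ 2 = u * s ^ 2 := by
    apply IsFractionRing.injective R K
    have hs0K : algebraMap R K s ≠ 0 := by simpa using hs0
    simp only [map_mul, map_pow] at h ⊢
    field_simp at h
    linear_combination h
  have hr0 : r ≠ 0 := by
    rintro rfl
    simp [hs0] at hrs
  obtain ⟨m, v, rfl⟩ := IsDiscreteValuationRing.eq_unit_mul_pow_irreducible hr0 hϖ
  obtain ⟨n, w, rfl⟩ := IsDiscreteValuationRing.eq_unit_mul_pow_irreducible hs0 hϖ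
  have hkmn : k + 2 * m = 2 * n := by
    refine IsDiscreteValuationRing.unit_mul_pow_congr_pow hϖ hϖ (v ^ 2) (u * w ^ 2) _ _ ?_
    push_cast
    linear_combination hrs
  exact (Nat.even_add.mp (hkmn ▸ even_two_mul n)).mpr (even_two_mul m)

namespace IsMaximalIntegral

variable {L : Submodule R M}

theorem irreducible_smul_mem (hL : IsMaximalIntegral B L) (hB : B.IsSymm)
    [Submodule.IsLattice K L] (hϖ : Irreducible ϖ) {x : M} (hx : x ∈ B.dualSubmodule L) :
    ϖ • x ∈ L :=
  have ⟨_, hn⟩ := exists_pow_smul_mem hϖ L x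
  hL.smul_mem_of_pow_smul_mem hB hx hn

/- Otherwise Chevalley–Warning, applied to the form `ϖ * B` on `L^∨ / L`, yields some `x ∈ L^∨`
outside `L` with `B x x ∈ R`, contradicting maximality. -/
theorem card_le_two [Finite (IsLocalRing.ResidueField R)] [Finite ι] [DecidableEq ι]
    (hL : IsMaximalIntegral B L) (hB : B.IsSymm) (hϖ : Irreducible ϖ) {e : Module.Basis ι K M}
    {s : Finset ι} (hdual : Submodule.span R (Set.range e) = B.dualSubmodule L)
    (hs : scaledSpan (s.piecewise (fun _ => ϖ) 1) e = L) : s.card ≤ 2 := by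
  by_contra! hcard
  have he : ∀ i, e i ∈ B.dualSubmodule L := fun i =>
    hdual ▸ Submodule.subset_span (Set.mem_range_self i)
  have hϖe : ∀ i ∈ s, ϖ • e i ∈ L := fun i hi => by
    simpa [hs, hi] using smul_mem_scaledSpan (a := s.piecewise (fun _ => ϖ) 1) (e := e) i
  have hgram : ∀ i j, ∃ r : R, j ∈ s → algebraMap R K r = ϖ • B (e i) (e j) := by
    intro i j
    by_cases hj : j ∈ s
    · obtain ⟨r, hr⟩ := Submodule.mem_one.mp (he i _ (hϖe j hj))
      exact ⟨r, fun _ => by rw [hr, LinearMap.map_smul_of_tower]⟩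
    · exact ⟨0, fun h => absurd h hj⟩
  choose A hA using hgram
  obtain ⟨c, ⟨i, hi, hci⟩, hc⟩ := exists_isUnit_sum_mul_mem_maximalIdeal hcard A
  obtain ⟨r, hr⟩ := Ideal.mem_span_singleton.mp (hϖ.maximalIdeal_eq ▸ hc)
  let x := ∑ i ∈ s, c i • e i
  have hBx : B x x = algebraMap R K r := by
    have hϖ0 : algebraMap R K ϖ ≠ 0 := by simpa using hϖ.ne_zero
    refine mul_left_cancel₀ hϖ0 ?_
    rw [algebraMap_mul_apply_sum_smul_self hA, hr, map_mul]
  have hxL : x ∈ L := hL.mem_of_apply_self_mem_one hB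
    (Submodule.sum_mem _ fun i _ => Submodule.smul_mem _ _ (he i))
    (Submodule.mem_one.mpr ⟨r, hBx.symm⟩)
  have hdvd : ϖ ∣ c i := by
    rw [← hs] at hxL
    simpa only [Finset.piecewise_eq_of_mem _ _ _ hi] using
      dvd_of_sum_smul_mem_scaledSpan (e.linearIndependent.restrict_scalars' R) hxL hi
  exact hϖ.not_isUnit (isUnit_of_dvd_unit hdvd hci)

end IsMaximalIntegral

theorem even_card_of_dualSubmodule_eq [Fintype ι] [DecidableEq ι] (hB : B.Nondegenerate)
    (hϖ : Irreducible ϖ) {b e : Module.Basis ι K M} {s : Finset ι}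
    (hdual : B.dualSubmodule (Submodule.span R (Set.range e)) =
      scaledSpan (s.piecewise (fun _ => ϖ) 1) e) {u : Rˣ} {t : K}
    (hdet : (LinearMap.BilinForm.toMatrix b B).det = algebraMap R K u * t ^ 2) :
    Even s.card := by
  have ha : ∀ i, s.piecewise (fun _ => ϖ) 1 i ≠ 0 := fun i => by
    by_cases hi : i ∈ s <;> simp [hi, hϖ.ne_zero]
  obtain ⟨v, hv⟩ := exists_units_prod_mul_det_toMatrix_eq hB ha hdual
  have hprod : ∏ i, s.piecewise (fun _ => ϖ) 1 i = ϖ ^ s.card := by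
    simp [Finset.prod_piecewise]
  have hu : algebraMap R K u * algebraMap R K (u⁻¹ : Rˣ) = 1 := by
    rw [← map_mul, Units.mul_inv, map_one]
  refine even_of_pow_mul_sq_eq_unit hϖ (x := (b.toMatrix e).det * t) (u := v * u⁻¹) ?_
  rw [← LinearMap.BilinForm.toMatrix_mul_basis_toMatrix b e B, Matrix.det_mul, Matrix.det_mul,
    Matrix.det_transpose, hdet, hprod] at hv
  rw [Units.val_mul, map_mul, ← hv]
  linear_combination (-algebraMap R K (ϖ ^ s.card) * ((b.toMatrix e).det * t) ^ 2) * hu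

theorem exists_isMaximalIntegral_card_eq_two [Finite (IsLocalRing.ResidueField R)] [Fintype ι]
    [DecidableEq ι] (hB : B.Nondegenerate) (hB' : B.IsSymm) (b : Module.Basis ι K M)
    (hϖ : Irreducible ϖ) {u : Rˣ} {t : K}
    (hdet : (LinearMap.BilinForm.toMatrix b B).det = algebraMap R K u * t ^ 2)
    (hnosd : ∀ L : Submodule R M, Submodule.IsLattice K L → B.dualSubmodule L ≠ L) :
    ∃ (L : Submodule R M) (e : Module.Basis ι K M) (s : Finset ι),
      IsMaximalIntegral B L ∧ Submodule.IsLattice K L ∧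
      Submodule.span R (Set.range e) = B.dualSubmodule L ∧
      scaledSpan (s.piecewise (fun _ => ϖ) 1) e = L ∧ s.card = 2 := by
  obtain ⟨L, hL, hlattice⟩ := exists_isMaximalIntegral_isLattice (R := R) hB hB' b
  have hduallattice := isLattice_dualSubmodule hB b L
  obtain ⟨e, s, he, hs⟩ := exists_scaledSpan_piecewise_eq b hL.1 hϖ
    fun x hx => hL.irreducible_smul_mem hB' hϖ hx
  have hle : s.card ≤ 2 := hL.card_le_two hB' hϖ he hs
  have heven : Even s.card := even_card_of_dualSubmodule_eq hB hϖ (b := b) (e := e)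
    (by rw [he, hs, dualSubmodule_dualSubmodule_of_isLattice hB hB' b]) hdet
  have hne : s.card ≠ 0 := fun h => hnosd L hlattice <| by
    rw [← he, ← hs, Finset.card_eq_zero.mp h, Finset.piecewise_empty, scaledSpan_one]
  refine ⟨L, e, s, hL, hlattice, he, hs, ?_⟩
  obtain ⟨k, hk⟩ := heven
  lia

end DiscreteValuationRing

section Chain

variable {p} {M : Type*} [AddCommGroup M] [Module ℤ_[p] M] {A A' C : Submodule ℤ_[p] M}

theorem chainLength_self (A : Submodule ℤ_[p] M) : chainLength p A A 0 :=
  ⟨fun _ => A, rfl, rfl, fun i => i.elim0⟩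

theorem chainLength_succ {k : ℕ} (h : A' ⋖ A) (hA : chainLength p A C k) :
    chainLength p A' C (k + 1) := by
  obtain ⟨f, rfl, rfl, hf⟩ := hA
  refine ⟨Fin.cons A' f, rfl, by simp [← Fin.succ_last], fun i => ?_⟩
  induction i using Fin.cases with
  | zero => simpa using h
  | succ i => simpa [← Fin.succ_castSucc] using hf i

theorem chainLength_scaledSpan_piecewise {ι : Type*} [Finite ι] [DecidableEq ι]
    {ϖ : ℤ_[p]} (hϖ : Irreducible ϖ) {e : ι → M} (he : LinearIndependent ℤ_[p] e) (s : Finset ι) :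
    chainLength p (scaledSpan (s.piecewise (fun _ => ϖ) 1) e)
      (Submodule.span ℤ_[p] (Set.range e)) s.card := by
  induction s using Finset.induction_on with
  | empty => simpa [scaledSpan_one] using chainLength_self _
  | insert i s hi ih =>
    rw [Finset.card_insert_of_notMem hi, Finset.piecewise_insert]
    refine chainLength_succ ?_ ih
    simpa [hi] using scaledSpan_update_covBy (a := s.piecewise (fun _ => ϖ) 1) hϖ he (i := i)
      (by simp [hi])

end Chain

theorem statement_2_general {ι : Type*} [Fintype ι] [DecidableEq ι]
    (Q : QuadraticForm ℚ_[p] V) (b : Module.Basis ι ℚ_[p] V)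
    (hdet : ∃ u s : ℚ_[p], ‖u‖ = 1 ∧ s ≠ 0 ∧
      (Matrix.of fun i j => QuadraticMap.polar Q (b i) (b j)).det = u * s ^ 2)
    (hnosd : ¬ ∃ L : Submodule ℤ_[p] V, IsLattice p L ∧ dualLattice p Q L = L) :
    ∃ Λ : Submodule ℤ_[p] V, IsLattice p Λ ∧
      (∀ x ∈ Λ, (p : ℤ_[p]) • x ∈ dualLattice p Q Λ) ∧
      dualLattice p Q Λ ≤ Λ ∧
      chainLength p (dualLattice p Q Λ) Λ 2 ∧
      ∀ x ∈ Λ, Q x ∈ (1 : Submodule ℤ_[p] ℚ_[p]) → x ∈ dualLattice p Q Λ := by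
  obtain ⟨u, t, hu, ht, hdet⟩ := hdet
  let B : LinearMap.BilinForm ℚ_[p] V := polarBilin Q
  have hgram : (LinearMap.BilinForm.toMatrix b B).det = u * t ^ 2 := by
    rw [← hdet]
    congr 1
    ext i j
    exact LinearMap.BilinForm.toMatrix_apply b B i j
  have hB : B.Nondegenerate := (LinearMap.BilinForm.nondegenerate_iff_det_ne_zero b).mpr <| by
    simp [hgram, ht, ← norm_ne_zero_iff, hu]
  have hB' : B.IsSymm := ⟨polar_comm Q⟩
  have := Finite.of_equiv _ (PadicInt.residueField (p := p)).symm.toEquiv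
  obtain ⟨L, e, s, hL, hlattice, he, hs, hcard⟩ :=
    exists_isMaximalIntegral_card_eq_two (u := PadicInt.mkUnits hu) hB hB' b
      PadicInt.irreducible_p hgram fun L hL h => hnosd ⟨L, ⟨hL.fg, hL.span_eq_top⟩, h⟩
  have hdual := isLattice_dualSubmodule hB b L
  have hdualdual : dualLattice p Q (B.dualSubmodule L) = L :=
    dualSubmodule_dualSubmodule_of_isLattice hB hB' b L
  refine ⟨B.dualSubmodule L, ⟨hdual.fg, hdual.span_eq_top⟩, ?_⟩
  rw [hdualdual]
  refine ⟨fun _ => hL.irreducible_smul_mem hB' PadicInt.irreducible_p, hL.1, ?_, fun x hx hQx => ?_⟩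
  · have he' := e.linearIndependent.restrict_scalars' ℤ_[p]
    simpa only [hs, he, hcard] using
      chainLength_scaledSpan_piecewise PadicInt.irreducible_p he' s
  · have hBx : B x x = (2 : ℕ) • Q x := polar_self Q x
    exact hL.mem_of_apply_self_mem_one hB' hx (hBx ▸ nsmul_mem hQx 2)

theorem statement_2 (hp : p ≠ 2) (n : ℕ) (hn : 3 ≤ n)
    (Q : QuadraticForm ℚ_[p] V)
    (hQ : LinearMap.SeparatingLeft (QuadraticMap.polarBilin Q))
    (b : Module.Basis (Fin n) ℚ_[p] V)
    -- unit determinant: the Gram determinant lies in `ℤ_p^× ⬝ (ℚ_p^×)²`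
    (hdet : ∃ u s : ℚ_[p], ‖u‖ = 1 ∧ s ≠ 0 ∧
      (Matrix.of fun i j => QuadraticMap.polar Q (b i) (b j)).det = u * s ^ 2)
    (hnosd : ¬ ∃ L : Submodule ℤ_[p] V, IsLattice p L ∧ dualLattice p Q L = L) :
    ∃ Λ : Submodule ℤ_[p] V, IsLattice p Λ ∧
      (∀ x ∈ Λ, (p : ℤ_[p]) • x ∈ dualLattice p Q Λ) ∧
      dualLattice p Q Λ ≤ Λ ∧
      chainLength p (dualLattice p Q Λ) Λ 2 ∧
      ∀ x ∈ Λ, Q x ∈ (1 : Submodule ℤ_[p] ℚ_[p]) → x ∈ dualLattice p Q Λ :=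
  statement_2_general p Q b hdet hnosd
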